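/- Let E be a separable Banach space and let μ be a Gaussian measure on E, i.e., a Borel probability measure such that the pushforward of μ under every continuous linear functional L : E → ℝ is a Gaussian measure on ℝ. Then there exist constants c > 0 and C > 0 such that for every ε > 0 and every R > 0, μ({x ∈ E : ε‖x‖ > R}) ≤ C exp(−c ε^{−2} R²). -/

import Mathlib

open MeasureTheory

section SquareExponentialTail

open Real ProbabilityTheory

lemma measureReal_ge_le_exp_mul_mgf_sq {Ω : Type*} {mΩ : MeasurableSpace Ω} {μ : Measure Ω}
    [IsFiniteMeasure μ] {X : Ω → ℝ} {c r : ℝ} (hc : 0 ≤ c) (hr : 0 ≤ r)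
    (hint : Integrable (fun ω ↦ exp (c * X ω ^ 2)) μ) :
    μ.real {ω | r ≤ X ω} ≤ exp (-c * r ^ 2) * mgf (fun ω ↦ X ω ^ 2) μ c :=
  calc μ.real {ω | r ≤ X ω}
    _ ≤ μ.real {ω | r ^ 2 ≤ X ω ^ 2} :=
      measureReal_mono <| Set.ofPred_subset_ofPred.2 fun _ hω ↦ pow_le_pow_left₀ hr hω 2
    _ ≤ exp (-c * r ^ 2) * mgf (fun ω ↦ X ω ^ 2) μ c :=
      measure_ge_le_exp_mul_mgf (r ^ 2) hc hint

lemma exists_measureReal_norm_ge_le_mul_exp_neg_sq {E : Type*} [NormedAddCommGroup E]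
    [NormedSpace ℝ E] [CompleteSpace E] [SecondCountableTopology E] [MeasurableSpace E]
    [BorelSpace E] (μ : Measure E) [IsGaussian μ] :
    ∃ c > 0, ∃ C > 0, ∀ r, 0 ≤ r → μ.real {x | r ≤ ‖x‖} ≤ C * exp (-c * r ^ 2) := by
  obtain ⟨c, hc, hint⟩ := IsGaussian.exists_integrable_exp_sq μ
  refine ⟨c, hc, mgf (fun x ↦ ‖x‖ ^ 2) μ c, mgf_pos hint, fun r hr ↦ ?_⟩
  rw [mul_comm]
  exact measureReal_ge_le_exp_mul_mgf_sq hc.le hr hint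

end SquareExponentialTail

/-- **Gaussian tail bound (Fernique).** If `μ` is a Gaussian measure on a separable
Banach space `E` (every one-dimensional projection by a continuous linear functional
is Gaussian on `ℝ`), then there are `c, C > 0` with
`μ {x : ε ‖x‖ > R} ≤ C exp(-c ε⁻² R²)` for all `ε, R > 0`. -/
theorem gaussian_tail_bound
    {E : Type*} [NormedAddCommGroup E] [NormedSpace ℝ E] [CompleteSpace E]
    [TopologicalSpace.SeparableSpace E] [MeasurableSpace E] [BorelSpace E]
    (μ : Measure E) [IsProbabilityMeasure μ]
    (hgauss : ∀ L : E →L[ℝ] ℝ, ∃ (m : ℝ) (v : NNReal),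
      μ.map L = ProbabilityTheory.gaussianReal m v) :
    ∃ c > (0 : ℝ), ∃ C > (0 : ℝ), ∀ ε > (0 : ℝ), ∀ R > (0 : ℝ),
      μ {x : E | ε * ‖x‖ > R} ≤ ENNReal.ofReal (C * Real.exp (-(c * R ^ 2 / ε ^ 2))) := by
  have : SecondCountableTopology E := UniformSpace.secondCountable_of_separable E
  have : ProbabilityTheory.IsGaussian μ :=
    ProbabilityTheory.isGaussian_of_map_eq_gaussianReal hgauss
  obtain ⟨c, hc, C, hC, htail⟩ := exists_measureReal_norm_ge_le_mul_exp_neg_sq μ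
  refine ⟨c, hc, C, hC, fun ε hε R hR ↦ ?_⟩
  have hscale : {x : E | ε * ‖x‖ > R} ⊆ {x | R / ε ≤ ‖x‖} :=
    Set.ofPred_subset_ofPred.2 fun _ hx ↦ (div_le_iff₀' hε).2 hx.le
  calc μ {x : E | ε * ‖x‖ > R}
    _ ≤ μ {x | R / ε ≤ ‖x‖} := measure_mono hscale
    _ = ENNReal.ofReal (μ.real {x | R / ε ≤ ‖x‖}) := by rw [ofReal_measureReal]
    _ ≤ ENNReal.ofReal (C * Real.exp (-c * (R / ε) ^ 2)) :=
      ENNReal.ofReal_le_ofReal (htail (R / ε) (by positivity))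
    _ = ENNReal.ofReal (C * Real.exp (-(c * R ^ 2 / ε ^ 2))) := by
      rw [div_pow, neg_mul, mul_div_assoc]
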